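/- arXiv:2402.07809 — 2 statements merged into one kernel-verified Lean document; each statement's English description precedes it below -/
import Mathlib

section
/- lim_{n→∞} Σ_{p=0}^{n} a_{n,p,0}² = 0. -/
open Real Finset Filter

lemma int_cos_int (k : ℤ) : ∫ x in (0:ℝ)..π, Real.cos (k * x) = if k = 0 then π else 0 := by
  split_ifs with h
  · simp [h]
  · have : (k:ℝ) ≠ 0 := by exact_mod_cast h
    rw [intervalIntegral.integral_comp_mul_left (fun x => Real.cos x) this]
    simp

lemma int_cos_nat (k : ℕ) : ∫ x in (0:ℝ)..π, Real.cos (k * x) = if k = 0 then π else 0 := by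
  have := int_cos_int k
  simpa using this

lemma int_cos_cos (p q : ℕ) : ∫ x in (0:ℝ)..π, Real.cos (p * x) * Real.cos (q * x) =
    if p = q then (if p = 0 then π else π / 2) else 0 := by
  have h : ∀ x : ℝ, Real.cos (p * x) * Real.cos (q * x) =
      (Real.cos (((p - q : ℤ) : ℝ) * x) + Real.cos (((p + q : ℤ) : ℝ) * x)) / 2 := by
    intro x
    push_cast
    rw [sub_mul, add_mul, Real.cos_sub, Real.cos_add]
    ring
  simp_rw [h]
  rw [intervalIntegral.integral_div, intervalIntegral.integral_add
    (Continuous.intervalIntegrable (by fun_prop) _ _)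
    (Continuous.intervalIntegrable (by fun_prop) _ _), int_cos_int, int_cos_int]
  by_cases hpq : p = q
  · subst hpq
    by_cases hp : p = 0
    · simp [hp]
    · have : ¬ ((p:ℤ) + p = 0) := by omega
      simp [hp]
  · have h1 : ¬ ((p:ℤ) + q = 0) := by omega
    have h2 : ¬ ((p:ℤ) - q = 0) := by omega
    simp only [h1, h2, hpq, if_false]; simp

lemma sum_sq_le (N : ℕ) (b : ℕ → ℝ) :
    π / 2 * ∑ p ∈ Finset.range N, b p ^ 2 ≤
      ∫ x in (0:ℝ)..π, (∑ p ∈ Finset.range N, b p * Real.cos (p * x)) ^ 2 := by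
  have h : ∀ x : ℝ, (∑ p ∈ Finset.range N, b p * Real.cos (p * x)) ^ 2 =
      ∑ p ∈ Finset.range N, ∑ q ∈ Finset.range N,
        b p * b q * (Real.cos (p * x) * Real.cos (q * x)) := by
    intro x
    rw [sq, Finset.sum_mul_sum]
    refine Finset.sum_congr rfl fun p _ => Finset.sum_congr rfl fun q _ => by ring
  simp_rw [h]
  rw [intervalIntegral.integral_finsetSum
    (fun _ _ => Continuous.intervalIntegrable (by fun_prop) _ _), Finset.mul_sum]
  refine Finset.sum_le_sum fun p hp => ?_
  rw [intervalIntegral.integral_finsetSum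
    (fun _ _ => Continuous.intervalIntegrable (by fun_prop) _ _)]
  simp_rw [intervalIntegral.integral_const_mul, int_cos_cos]
  simp only [mul_ite, mul_zero, Finset.sum_ite_eq, hp, if_true]
  have := Real.pi_pos
  split_ifs <;> nlinarith [sq_nonneg (b p)]

lemma int_row (N : ℕ) (c : ℕ → ℕ → ℝ) (x : ℝ) :
    ∫ y in (0:ℝ)..π, ∑ p ∈ Finset.range (N+1), ∑ q ∈ Finset.range (N+1),
          c p q * Real.cos (p * x) * Real.cos (q * y) =
      π * ∑ p ∈ Finset.range (N+1), c p 0 * Real.cos (p * x) := by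
  rw [intervalIntegral.integral_finsetSum
    (fun _ _ => Continuous.intervalIntegrable (by fun_prop) _ _), Finset.mul_sum]
  refine Finset.sum_congr rfl fun p hp => ?_
  rw [intervalIntegral.integral_finsetSum
    (fun _ _ => Continuous.intervalIntegrable (by fun_prop) _ _)]
  simp_rw [intervalIntegral.integral_const_mul, int_cos_nat]
  simp [mul_comm]

open MeasureTheory in
lemma rl_measure (ν : Measure ℝ) [IsFiniteMeasure ν] (hν : ν ≪ volume) :
    Tendsto (fun n : ℕ => ∫ u, Real.cos (n * u) ∂ν) atTop (nhds 0) := by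
  have h1 := Real.tendsto_integral_exp_smul_cocompact (fun u => (((ν.rnDeriv volume u).toReal : ℝ) : ℂ))
  have h2 : Tendsto (fun n : ℕ => (n : ℝ) / (2 * π)) atTop (cocompact ℝ) := by
    refine Tendsto.mono_right ?_ atTop_le_cocompact
    exact tendsto_natCast_atTop_atTop.atTop_div_const (by positivity)
  have h3 := (Complex.continuous_re.tendsto _).comp (h1.comp h2)
  simp only [Complex.zero_re] at h3
  refine h3.congr fun n => ?_
  simp only [Function.comp]
  rw [← integral_rnDeriv_smul hν]
  have hi : Integrable (fun v : ℝ => Real.fourierChar (-(v * ((n:ℝ) / (2 * π)))) •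
      (((ν.rnDeriv volume v).toReal : ℝ) : ℂ)) := by
    have h0 : Integrable (fun v => (((ν.rnDeriv volume v).toReal : ℝ) : ℂ)) :=
      Measure.integrable_toReal_rnDeriv.ofReal
    have : Integrable (fun v : ℝ => ((Real.fourierChar (-(v * ((n:ℝ) / (2 * π)))) : Circle) : ℂ) *
      (((ν.rnDeriv volume v).toReal : ℝ) : ℂ)) := by
      refine h0.bdd_mul (c := 1) (Continuous.aestronglyMeasurable (by fun_prop)) ?_
      filter_upwards with v using (Circle.norm_coe _).le
    exact this
  have := integral_re hi
  simp only [RCLike.re_to_complex] at this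
  rw [← this]
  congr 1
  ext v
  rw [Circle.smul_def, Real.fourierChar_apply, smul_eq_mul, Complex.re_mul_ofReal,
    Complex.exp_ofReal_mul_I_re, smul_eq_mul, mul_comm]
  congr 1
  rw [← Real.cos_neg]
  congr 1
  have := Real.pi_pos.ne'
  field_simp

lemma cheb_eq (n : ℕ) (c y : ℝ) (hc : |c| ≤ 1) :
    (Polynomial.Chebyshev.T ℝ n).eval ((c + Real.cos y) / 2) =
      Real.cos (n * Real.arccos ((c + Real.cos y) / 2)) := by
  obtain ⟨h1, h2⟩ := abs_le.1 hc
  have h3 := Real.neg_one_le_cos y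
  have h4 := Real.cos_le_one y
  conv_lhs => rw [← Real.cos_arccos (x := (c + Real.cos y) / 2) (by linarith) (by linarith)]
  rw [Polynomial.Chebyshev.T_real_cos]
  simp

open MeasureTheory in
lemma ac_push (c : ℝ) (hc : |c| ≤ 1) :
    (volume.restrict (Set.Ioc 0 π)).map (fun y => Real.arccos ((c + Real.cos y) / 2))
      ≪ (volume : Measure ℝ) := by
  have hm : Measurable (fun y => Real.arccos ((c + Real.cos y) / 2)) :=
    (by fun_prop : Continuous (fun y => Real.arccos ((c + Real.cos y) / 2))).measurable
  obtain ⟨hc1, hc2⟩ := abs_le.1 hc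
  refine Measure.AbsolutelyContinuous.mk fun s hs h0 => ?_
  rw [Measure.map_apply hm hs, Measure.restrict_apply (hm hs)]
  set t := s ∩ {u | 2 * Real.cos u - c ≠ -1 ∧ 2 * Real.cos u - c ≠ 1} with ht
  have ht0 : volume t = 0 := measure_mono_null Set.inter_subset_left h0
  have hd : DifferentiableOn ℝ (fun u => Real.arccos (2 * Real.cos u - c)) t := by
    intro u hu
    refine DifferentiableAt.differentiableWithinAt ?_
    exact DifferentiableAt.comp (g := Real.arccos) (f := fun u => 2 * Real.cos u - c) u (Real.differentiableAt_arccos.2 hu.2) (by fun_prop)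
  have him := addHaar_image_eq_zero_of_differentiableOn_of_addHaar_eq_zero volume hd ht0
  refine measure_mono_null (t := _ ∪ {π}) ?_ (measure_union_null him (measure_singleton π))
  rintro y ⟨hy, hy0, hyp⟩
  rcases hyp.eq_or_lt with rfl | hyp
  · right; rfl
  left
  have h3 := Real.neg_one_le_cos y
  have h4 := Real.cos_le_one y
  have e : 2 * Real.cos (Real.arccos ((c + Real.cos y) / 2)) - c = Real.cos y := by
    rw [Real.cos_arccos (by linarith) (by linarith)]; ring
  refine ⟨_, ⟨hy, ?_⟩, ?_⟩
  · simp only [Set.mem_ofPred_eq]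
    rw [e]
    constructor
    · have := Real.strictAntiOn_cos ⟨hy0.le, hyp.le⟩ ⟨Real.pi_pos.le, le_rfl⟩ hyp
      rw [Real.cos_pi] at this; exact this.ne'
    · have := Real.strictAntiOn_cos ⟨le_rfl, Real.pi_pos.le⟩ ⟨hy0.le, hyp.le⟩ hy0
      rw [Real.cos_zero] at this; exact this.ne
  · simp only
    rw [e, Real.arccos_cos hy0.le hyp.le]

open MeasureTheory in
lemma pointwise (x : ℝ) : Tendsto (fun n : ℕ => ∫ y in (0:ℝ)..π,
    (Polynomial.Chebyshev.T ℝ n).eval ((Real.cos x + Real.cos y) / 2)) atTop (nhds 0) := by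
  have hm : Measurable (fun y => Real.arccos ((Real.cos x + Real.cos y) / 2)) :=
    (by fun_prop : Continuous (fun y => Real.arccos ((Real.cos x + Real.cos y) / 2))).measurable
  refine (rl_measure _ (ac_push (Real.cos x) (Real.abs_cos_le_one x))).congr fun n => ?_
  rw [integral_map hm.aemeasurable (Continuous.aestronglyMeasurable (by fun_prop)),
    intervalIntegral.integral_of_le Real.pi_pos.le]
  simp_rw [cheb_eq n _ _ (Real.abs_cos_le_one x)]

lemma main_aux
    (a : ℕ → ℕ → ℕ → ℝ)
    (hb : ∀ n : ℕ, ∀ x : ℝ, ∫ y in (0:ℝ)..π,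
      (Polynomial.Chebyshev.T ℝ n).eval ((Real.cos x + Real.cos y) / 2) =
      π * ∑ p ∈ Finset.range (n+1), a n p 0 * Real.cos (p * x)) 
    (hs : ∀ n, π / 2 * ∑ p ∈ Finset.range (n+1), a n p 0 ^ 2 ≤
      ∫ x in (0:ℝ)..π, (∑ p ∈ Finset.range (n+1), a n p 0 * Real.cos (p * x)) ^ 2) :
    Filter.Tendsto (fun n : ℕ => ∑ p ∈ Finset.range (n + 1), (a n p 0) ^ 2)
      Filter.atTop (nhds 0) := by
  have hpi := Real.pi_pos
  have hg : ∀ n : ℕ, ∀ x : ℝ, ∑ p ∈ Finset.range (n+1), a n p 0 * Real.cos (p * x) =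
      (∫ y in (0:ℝ)..π,
        (Polynomial.Chebyshev.T ℝ n).eval ((Real.cos x + Real.cos y) / 2)) / π := by
    intro n x
    rw [hb, mul_div_cancel_left₀ _ hpi.ne']
  have hbd : ∀ n : ℕ, ∀ x : ℝ, |∑ p ∈ Finset.range (n+1), a n p 0 * Real.cos (p * x)| ≤ 1 := by
    intro n x
    rw [hg, abs_div, abs_of_pos hpi, div_le_one hpi]
    have := intervalIntegral.norm_integral_le_of_norm_le_const (a := 0) (b := π) (C := 1)
      (f := fun y => (Polynomial.Chebyshev.T ℝ n).eval ((Real.cos x + Real.cos y) / 2)) (by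
        intro y _
        rw [cheb_eq n _ _ (Real.abs_cos_le_one x)]
        exact Real.abs_cos_le_one _)
    simpa [abs_of_pos hpi] using this
  have hlim : Tendsto (fun n : ℕ => ∫ x in (0:ℝ)..π,
      (∑ p ∈ Finset.range (n+1), a n p 0 * Real.cos (p * x)) ^ 2) atTop
      (nhds (∫ x in (0:ℝ)..π, (0:ℝ))) := by
    refine intervalIntegral.tendsto_integral_filter_of_dominated_convergence (fun _ => 1)
      ?_ ?_ ?_ ?_
    · filter_upwards with n
      exact Continuous.aestronglyMeasurable (by fun_prop)
    · filter_upwards with n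
      filter_upwards with x _
      rw [norm_pow]
      exact pow_le_one₀ (norm_nonneg _) (hbd n x)
    · simp
    · filter_upwards with x _
      have := ((pointwise x).div_const π).pow 2
      simp_rw [hg]
      simpa using this
  have h2 := hlim.const_mul (2 / π)
  simp only [intervalIntegral.integral_zero, mul_zero] at h2
  refine squeeze_zero (fun n => Finset.sum_nonneg fun p _ => sq_nonneg _) (fun n => ?_) h2
  have := hs n
  rw [div_mul_eq_mul_div, le_div_iff₀ hpi]
  linarith

/-- `lim_{n→∞} Σ_{p=0}^{n} a_{n,p,0}² = 0`. -/
theorem sum_sq_boundary_coeff_tendsto_zero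
    (a : ℕ → ℕ → ℕ → ℝ)
    (ha : ∀ (n : ℕ) (x y : ℝ),
      (Polynomial.Chebyshev.T ℝ n).eval ((Real.cos x + Real.cos y) / 2) =
        ∑ p ∈ Finset.range (n + 1), ∑ q ∈ Finset.range (n + 1),
          a n p q * Real.cos (p * x) * Real.cos (q * y)) :
    Filter.Tendsto (fun n : ℕ => ∑ p ∈ Finset.range (n + 1), (a n p 0) ^ 2)
      Filter.atTop (nhds 0) := by
  refine main_aux a (fun n x => ?_) (fun n => sum_sq_le (n + 1) (fun p => a n p 0))
  rw [← int_row n (a n) x]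
  simp_rw [ha n x]
end

section
/- For all K, L ∈ ℕ, lim_{ε→0⁺} limsup_{n→∞} | I_{K,L}(ε,n) − J_{K,L}(ε,n) | = 0, where I_{K,L}(ε,n) = (1/(π² n^{2(K+L)})) ∫_{A_ε} ( T_n^{(K+L)}((cos x + cos y)/2) · (−sin x / 2)^K · (−sin y / 2)^L )² dx dy and J_{K,L}(ε,n) = (1/(π² 2^{2(K+L)})) ∫_{A_ε} ξ_{K+L}²(n θ(x,y)) · (sin x / sin θ(x,y))^{2K} · (sin y / sin θ(x,y))^{2L} dx dy. -/
open Real MeasureTheory Filter Polynomial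

/-- `A_ε = {(x,y) ∈ [0,2π]² : |(cos x + cos y)/2| ≤ 1 − ε}`. -/
def goodSet (ε : ℝ) : Set (ℝ × ℝ) :=
  {z | z ∈ Set.Icc (0 : ℝ) (2 * π) ×ˢ Set.Icc (0 : ℝ) (2 * π) ∧
    |(Real.cos z.1 + Real.cos z.2) / 2| ≤ 1 - ε}

/-- `θ(x,y) = arccos((cos x + cos y)/2)`. -/
noncomputable def thetaFun (x y : ℝ) : ℝ :=
  Real.arccos ((Real.cos x + Real.cos y) / 2)

/-- `I_{K,L}(ε,n) = (1/(π² n^{2(K+L)})) ∫_{A_ε}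
  (T_n^{(K+L)}((cos x + cos y)/2) (−sin x/2)^K (−sin y/2)^L)² dx dy`. -/
noncomputable def mainTermIntegral (K L : ℕ) (ε : ℝ) (n : ℕ) : ℝ :=
  (π ^ 2 * (n : ℝ) ^ (2 * (K + L)))⁻¹ *
    ∫ z in goodSet ε,
      ((Polynomial.derivative^[K + L] (Polynomial.Chebyshev.T ℝ n)).eval
          ((Real.cos z.1 + Real.cos z.2) / 2) *
        (-Real.sin z.1 / 2) ^ K * (-Real.sin z.2 / 2) ^ L) ^ 2

/-- `J_{K,L}(ε,n) = (1/(π² 2^{2(K+L)})) ∫_{A_ε} ξ_{K+L}²(n θ(x,y))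
  (sin x / sin θ(x,y))^{2K} (sin y / sin θ(x,y))^{2L} dx dy`,
where `ξ_r` is the `r`-th derivative of cosine. -/
noncomputable def simplifiedIntegral (K L : ℕ) (ε : ℝ) (n : ℕ) : ℝ :=
  (π ^ 2 * 2 ^ (2 * (K + L)))⁻¹ *
    ∫ z in goodSet ε,
      (iteratedDeriv (K + L) Real.cos ((n : ℝ) * thetaFun z.1 z.2)) ^ 2 *
        (Real.sin z.1 / Real.sin (thetaFun z.1 z.2)) ^ (2 * K) *
        (Real.sin z.2 / Real.sin (thetaFun z.1 z.2)) ^ (2 * L)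

lemma ss_xi_step (r : ℕ) (t : ℝ) :
    iteratedDeriv (r + 2) Real.cos t = - iteratedDeriv r Real.cos t := by
  rw [Real.iteratedDeriv_add_one_cos (r + 1), Real.iteratedDeriv_add_one_sin r]
  rfl

lemma ss_key (ε : ℝ) (hε : 0 < ε) (r : ℕ) : ∃ C : ℝ, 0 ≤ C ∧ ∀ (n : ℕ) (θ : ℝ), 1 ≤ n →
    ε ≤ Real.sin θ →
    |(Polynomial.derivative^[r] (Polynomial.Chebyshev.T ℝ n)).eval (Real.cos θ) * Real.sin θ ^ r
      / (n : ℝ) ^ r - (-1) ^ r * iteratedDeriv r Real.cos (n * θ)| ≤ C / n := by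
  induction r using Nat.twoStepInduction with
  | zero =>
    refine ⟨0, le_rfl, fun n θ hn hs => ?_⟩
    simp [Polynomial.Chebyshev.T_real_cos]
  | one =>
    refine ⟨0, le_rfl, fun n θ hn hs => ?_⟩
    have hn' : (n : ℝ) ≠ 0 := by positivity
    have := Polynomial.Chebyshev.U_real_cos θ ((n : ℤ) - 1)
    push_cast at this
    rw [sub_add_cancel] at this
    simp [Polynomial.Chebyshev.T_derivative_eq_U, iteratedDeriv_one]
    rw [mul_assoc, this]
    field_simp
    simp
  | more r ih0 ih1 =>
    obtain ⟨C0, hC0, h0⟩ := ih0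
    obtain ⟨C1, hC1, h1⟩ := ih1
    refine ⟨(2 * r + 1) * (C1 + 1) / ε + r ^ 2 * (C0 + 1) + C0, by positivity,
      fun n θ hn hs => ?_⟩
    have h0 := h0 n θ hn hs
    have h1 := h1 n θ hn hs
    have hn1 : (1 : ℝ) ≤ n := by exact_mod_cast hn
    have hn0 : (0 : ℝ) < n := by linarith
    have hs0 : 0 < Real.sin θ := by linarith
    have hrec := Polynomial.Chebyshev.one_sub_X_sq_mul_iterate_derivative_T_eval
      (R := ℝ) (n : ℤ) r (Real.cos θ)
    have hsq : 1 - Real.cos θ ^ 2 = Real.sin θ ^ 2 := by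
      have := Real.sin_sq_add_cos_sq θ; linarith
    rw [hsq] at hrec
    push_cast at hrec
    have hx0 := Real.abs_iteratedDeriv_cos_le_one r (n * θ)
    have hx1 := Real.abs_iteratedDeriv_cos_le_one (r + 1) (n * θ)
    have hc := Real.abs_cos_le_one θ
    rw [ss_xi_step]
    set D0 := (Polynomial.derivative^[r] (Polynomial.Chebyshev.T ℝ n)).eval (Real.cos θ)
    set D1 := (Polynomial.derivative^[r + 1] (Polynomial.Chebyshev.T ℝ n)).eval (Real.cos θ)
    set D2 := (Polynomial.derivative^[r + 2] (Polynomial.Chebyshev.T ℝ n)).eval (Real.cos θ)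
    set s := Real.sin θ
    set x := Real.cos θ
    set X0 := iteratedDeriv r Real.cos (n * θ)
    set X1 := iteratedDeriv (r + 1) Real.cos (n * θ)
    have hE2 : D2 * s ^ (r + 2) / (n : ℝ) ^ (r + 2) =
        (2 * r + 1) * x * (D1 * s ^ (r + 1) / (n : ℝ) ^ (r + 1)) / (s * n)
        + r ^ 2 * (D0 * s ^ r / (n : ℝ) ^ r) / n ^ 2 - D0 * s ^ r / (n : ℝ) ^ r := by
      have : D2 * s ^ (r + 2) = (s ^ 2 * D2) * s ^ r := by ring
      rw [this, hrec]
      field_simp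
      ring
    rw [hE2]
    set E0 := D0 * s ^ r / (n : ℝ) ^ r
    set E1 := D1 * s ^ (r + 1) / (n : ℝ) ^ (r + 1)
    have hb0 : |E0| ≤ C0 + 1 := by
      have a : |(-1) ^ r * X0| ≤ 1 := by rw [abs_mul]; simpa using hx0
      have b : C0 / n ≤ C0 := div_le_self hC0 hn1
      have := abs_sub_abs_le_abs_sub E0 ((-1) ^ r * X0)
      linarith
    have hb1 : |E1| ≤ C1 + 1 := by
      have a : |(-1) ^ (r + 1) * X1| ≤ 1 := by rw [abs_mul]; simpa using hx1
      have b : C1 / n ≤ C1 := div_le_self hC1 hn1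
      have := abs_sub_abs_le_abs_sub E1 ((-1) ^ (r + 1) * X1)
      linarith
    have t1 : |(2 * r + 1) * x * E1 / (s * n)| ≤ (2 * r + 1) * (C1 + 1) / ε / n := by
      rw [abs_div, abs_mul, abs_mul, abs_of_pos (mul_pos hs0 hn0), div_div,
        abs_of_pos (by positivity : (0 : ℝ) < 2 * r + 1)]
      have : (2 * (r : ℝ) + 1) * |x| * |E1| ≤ (2 * r + 1) * 1 * (C1 + 1) := by gcongr
      rw [mul_one] at this
      gcongr
    have t2 : |r ^ 2 * E0 / n ^ 2| ≤ r ^ 2 * (C0 + 1) / n := by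
      rw [abs_div, abs_mul, abs_of_nonneg (by positivity : (0 : ℝ) ≤ (r : ℝ) ^ 2),
        abs_of_pos (by positivity : (0 : ℝ) < (n : ℝ) ^ 2)]
      gcongr
      nlinarith
    have e : (2 * r + 1) * x * E1 / (s * n) + r ^ 2 * E0 / n ^ 2 - E0 - (-1) ^ (r + 2) * -X0
        = (2 * r + 1) * x * E1 / (s * n) + r ^ 2 * E0 / n ^ 2 - (E0 - (-1) ^ r * X0) := by ring
    rw [e, add_div, add_div]
    refine (abs_sub _ _).trans ?_
    have := abs_add_le ((2 * r + 1) * x * E1 / (s * n)) (r ^ 2 * E0 / n ^ 2)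
    linarith

lemma ss_sin_ge {ε : ℝ} (hε : 0 < ε) (hε1 : ε < 1) {z : ℝ × ℝ} (hz : z ∈ goodSet ε) :
    ε ≤ Real.sin (thetaFun z.1 z.2) := by
  unfold thetaFun
  rw [Real.sin_arccos]
  apply Real.le_sqrt_of_sq_le
  have h := hz.2
  have := sq_le_sq' (by linarith [abs_nonneg ((Real.cos z.1 + Real.cos z.2) / 2)]) h
  rw [sq_abs] at this
  nlinarith

lemma ss_cos {ε : ℝ} (hε : 0 < ε) {z : ℝ × ℝ} (hz : z ∈ goodSet ε) :
    Real.cos (thetaFun z.1 z.2) = (Real.cos z.1 + Real.cos z.2) / 2 := by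
  have h := abs_le.1 hz.2
  exact Real.cos_arccos (by linarith) (by linarith)

lemma ss_compact (ε : ℝ) : IsCompact (goodSet ε) := by
  have : goodSet ε = (Set.Icc (0 : ℝ) (2 * π) ×ˢ Set.Icc (0 : ℝ) (2 * π)) ∩
      {z | |(Real.cos z.1 + Real.cos z.2) / 2| ≤ 1 - ε} := rfl
  rw [this]
  exact (isCompact_Icc.prod isCompact_Icc).inter_right
    (isClosed_le (by fun_prop) (by fun_prop))

lemma ss_point (K L : ℕ) (ε : ℝ) (hε : 0 < ε) (hε1 : ε < 1) : ∃ C : ℝ, 0 ≤ C ∧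
    ∀ (n : ℕ), 1 ≤ n → ∀ z ∈ goodSet ε,
    ‖(π ^ 2 * (n : ℝ) ^ (2 * (K + L)))⁻¹ *
      ((Polynomial.derivative^[K + L] (Polynomial.Chebyshev.T ℝ n)).eval
          ((Real.cos z.1 + Real.cos z.2) / 2) *
        (-Real.sin z.1 / 2) ^ K * (-Real.sin z.2 / 2) ^ L) ^ 2 -
      (π ^ 2 * 2 ^ (2 * (K + L)))⁻¹ *
      ((iteratedDeriv (K + L) Real.cos ((n : ℝ) * thetaFun z.1 z.2)) ^ 2 *
        (Real.sin z.1 / Real.sin (thetaFun z.1 z.2)) ^ (2 * K) *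
        (Real.sin z.2 / Real.sin (thetaFun z.1 z.2)) ^ (2 * L))‖ ≤ C / n := by
  obtain ⟨C, hC, h⟩ := ss_key ε hε (K + L)
  refine ⟨(π ^ 2 * 2 ^ (2 * (K + L)))⁻¹ * (ε ^ (2 * (K + L)))⁻¹ * (C * (C + 2)),
    by positivity, fun n hn z hz => ?_⟩
  have hs := ss_sin_ge hε hε1 hz
  have h := h n _ hn hs
  rw [ss_cos hε hz] at h
  have hn1 : (1 : ℝ) ≤ n := by exact_mod_cast hn
  have hn0 : (0 : ℝ) < n := by linarith
  have hx := Real.abs_iteratedDeriv_cos_le_one (K + L) (n * thetaFun z.1 z.2)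
  set D := (Polynomial.derivative^[K + L] (Polynomial.Chebyshev.T ℝ n)).eval
    ((Real.cos z.1 + Real.cos z.2) / 2)
  set X := iteratedDeriv (K + L) Real.cos (n * thetaFun z.1 z.2)
  set s := Real.sin (thetaFun z.1 z.2)
  have hs0 : 0 < s := by linarith
  set E := D * s ^ (K + L) / (n : ℝ) ^ (K + L) with hE
  have hD : D = E * n ^ (K + L) / s ^ (K + L) := by rw [hE]; field_simp
  have e : (π ^ 2 * (n : ℝ) ^ (2 * (K + L)))⁻¹ *
      (D * (-Real.sin z.1 / 2) ^ K * (-Real.sin z.2 / 2) ^ L) ^ 2 -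
      (π ^ 2 * 2 ^ (2 * (K + L)))⁻¹ * (X ^ 2 * (Real.sin z.1 / s) ^ (2 * K) *
        (Real.sin z.2 / s) ^ (2 * L)) =
      (π ^ 2 * 2 ^ (2 * (K + L)))⁻¹ * (s ^ (2 * (K + L)))⁻¹ *
        ((Real.sin z.1 ^ 2) ^ K * (Real.sin z.2 ^ 2) ^ L) * (E ^ 2 - X ^ 2) := by
    have e1 : (D * (-Real.sin z.1 / 2) ^ K * (-Real.sin z.2 / 2) ^ L) ^ 2 =
        D ^ 2 * ((Real.sin z.1 ^ 2) ^ K * (Real.sin z.2 ^ 2) ^ L) / 2 ^ (2 * (K + L)) := by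
      have q : ∀ (a : ℝ) (k : ℕ), ((-a / 2) ^ k) ^ 2 = (a ^ 2) ^ k / 2 ^ (2 * k) := by
        intro a k
        rw [← pow_mul, mul_comm k 2, pow_mul, div_pow, neg_sq, div_pow, ← pow_mul 2 2 k]
      rw [mul_pow, mul_pow, q, q, mul_add, pow_add]
      field_simp
    rw [e1, hD, div_pow, div_pow (Real.sin z.1), div_pow (Real.sin z.2), pow_mul (Real.sin z.1),
      pow_mul (Real.sin z.2)]
    field_simp
    ring
  rw [e, Real.norm_eq_abs, abs_mul]
  have hEX : |E ^ 2 - X ^ 2| ≤ C / n * (C + 2) := by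
    have hsq : E ^ 2 - X ^ 2 = (E - (-1) ^ (K + L) * X) * (E + (-1) ^ (K + L) * X) := by
      have : ((-1 : ℝ) ^ (K + L)) ^ 2 = 1 := by rw [← pow_mul, mul_comm, pow_mul]; simp
      linear_combination (X ^ 2) * this
    have a : |(-1) ^ (K + L) * X| ≤ 1 := by rw [abs_mul]; simpa using hx
    have b : C / n ≤ C := div_le_self hC hn1
    have c : |E + (-1) ^ (K + L) * X| ≤ C + 2 := by
      have h1 := abs_sub_abs_le_abs_sub E ((-1) ^ (K + L) * X)
      have h2 := abs_add_le E ((-1) ^ (K + L) * X)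
      linarith
    rw [hsq, abs_mul]
    gcongr
  have hsin : (Real.sin z.1 ^ 2) ^ K * (Real.sin z.2 ^ 2) ^ L ≤ 1 :=
    mul_le_one₀ (pow_le_one₀ (sq_nonneg _) (Real.sin_sq_le_one _)) (by positivity)
      (pow_le_one₀ (sq_nonneg _) (Real.sin_sq_le_one _))
  rw [abs_of_nonneg (by positivity)]
  calc _ ≤ (π ^ 2 * 2 ^ (2 * (K + L)))⁻¹ * (ε ^ (2 * (K + L)))⁻¹ * 1 * (C / n * (C + 2)) := by
        gcongr
    _ = _ := by ring

lemma ss_tendsto (K L : ℕ) (ε : ℝ) (hε : 0 < ε) (hε1 : ε < 1) :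
    Tendsto (fun n : ℕ => |mainTermIntegral K L ε n - simplifiedIntegral K L ε n|)
      atTop (nhds 0) := by
  obtain ⟨C, hC, h⟩ := ss_point K L ε hε hε1
  have hlim : Tendsto (fun n : ℕ => C / (n : ℝ) * volume.real (goodSet ε)) atTop (nhds 0) := by
    simpa using (tendsto_const_div_atTop_nhds_zero_nat C).mul_const (volume.real (goodSet ε))
  refine squeeze_zero' (Eventually.of_forall fun _ => abs_nonneg _) ?_ hlim
  filter_upwards [eventually_ge_atTop 1] with n hn
  unfold mainTermIntegral simplifiedIntegral
  rw [← integral_const_mul, ← integral_const_mul, ← integral_sub, ← Real.norm_eq_abs]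
  · exact MeasureTheory.norm_setIntegral_le_of_norm_le_const (ss_compact ε).measure_lt_top (h n hn)
  · apply ContinuousOn.integrableOn_compact (ss_compact ε)
    apply Continuous.continuousOn
    fun_prop
  · apply ContinuousOn.integrableOn_compact (ss_compact ε)
    have hθ : Continuous fun z : ℝ × ℝ => thetaFun z.1 z.2 := by
      unfold thetaFun
      fun_prop
    have hX : Continuous (iteratedDeriv (K + L) Real.cos) :=
      (Real.differentiable_iteratedDeriv_cos (K + L)).continuous
    have hne : ∀ z ∈ goodSet ε, Real.sin (thetaFun z.1 z.2) ≠ 0 := fun z hz =>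
      (hε.trans_le (ss_sin_ge hε hε1 hz)).ne'
    have hd1 : ContinuousOn (fun z : ℝ × ℝ => Real.sin z.1 / Real.sin (thetaFun z.1 z.2))
        (goodSet ε) := ContinuousOn.div (by fun_prop) (by fun_prop) hne
    have hd2 : ContinuousOn (fun z : ℝ × ℝ => Real.sin z.2 / Real.sin (thetaFun z.1 z.2))
        (goodSet ε) := ContinuousOn.div (by fun_prop) (by fun_prop) hne
    have hXc : Continuous fun z : ℝ × ℝ =>
        iteratedDeriv (K + L) Real.cos ((n : ℝ) * thetaFun z.1 z.2) :=
      hX.comp (continuous_const.mul hθ)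
    exact continuousOn_const.mul
      (((hXc.continuousOn.pow 2).mul (hd1.pow (2 * K))).mul (hd2.pow (2 * L)))

/-- `lim_{ε→0⁺} limsup_{n→∞} |I_{K,L}(ε,n) − J_{K,L}(ε,n)| = 0`. -/
theorem second_simplification (K L : ℕ) :
    Filter.Tendsto (fun ε : ℝ =>
        Filter.limsup (fun n : ℕ => |mainTermIntegral K L ε n - simplifiedIntegral K L ε n|)
          Filter.atTop)
      (nhdsWithin 0 (Set.Ioi 0)) (nhds 0) := by
  apply tendsto_const_nhds.congr'
  filter_upwards [Ioo_mem_nhdsGT (zero_lt_one (α := ℝ))] with ε hε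
  exact (ss_tendsto K L ε hε.1 hε.2).limsup_eq.symm
end
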